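/- Let p be a prime, F a field of characteristic p, and r, s integers with 1 ≤ r ≤ s. Call an integer k with 0 ≤ k ≤ r a jump if p does not divide D_k(r,s) (so k = 0 is a jump since D_0(r,s) = 1). Suppose J_r ⊗ J_s is similar over F to the block-diagonal matrix with diagonal blocks J_{λ_1},…,J_{λ_r}, where λ_1 ≥ ⋯ ≥ λ_r > 0. Then p does not divide D_r(r,s), and for every 1 ≤ k ≤ r: if k is a jump, then λ_k = r + s − 2k + ℓ(k), where ℓ(k) is the least positive integer such that k − ℓ(k) is a jump; and if k is not a jump, then k < r and λ_k = λ_{k+1}. -/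

import Mathlib

/-!
Modulo `x ^ r` and `y ^ s`, the operator `J_r ⊗ J_s` is multiplication by `(1 + x) * (1 + y)`, which
the automorphism `x ↦ x * (1 + y)` identifies with multiplication by `1 + z`, where `z = x + y`. The
number of parts of `λ` exceeding `m` is therefore `rank z ^ m - rank z ^ (m + 1)`.

The colon ideal `(x ^ r, y ^ s) : z ^ m` is generated by two forms `f`, `g` of degrees `a`, `b` with
`a + b = r + s - m` and `z ∣ g`, `z ∤ f`. The rank difference is then the dimension `a` of
`F[x, y] / (z, f)`. Passing from `m` to `m + 1` replaces `g` by `g / z` and possibly exchanges the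
two forms, so `a` either persists or becomes `b - 1`. On the other hand `D_k` is the determinant of
`z ^ (r + s - 2 * k)` from degree `k - 1` to degree `r + s - k - 1`; it vanishes exactly when the
colon ideal for `m = r + s - 2 * k` has a nonzero form of degree `k - 1`, that is, when `a ≠ k`.
Hence the jumps are the values of the partition conjugate to `λ`.
-/

open Kronecker

/-- The `m × m` Jordan block with eigenvalue `1`: ones on the main diagonal and the
superdiagonal, zeros elsewhere. -/
def jordanBlock (F : Type*) [Zero F] [One F] (m : ℕ) : Matrix (Fin m) (Fin m) F :=
  Matrix.of fun i j => if (j : ℕ) = (i : ℕ) ∨ (j : ℕ) = (i : ℕ) + 1 then 1 else 0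

/-- The block-diagonal matrix whose diagonal blocks are the Jordan blocks `J_{d i}`, `i : ι`. -/
def jordanBlockDiag (F : Type*) [Field F] {ι : Type} [DecidableEq ι] (d : ι → ℕ) :
    Matrix ((i : ι) × Fin (d i)) ((i : ι) × Fin (d i)) F :=
  Matrix.blockDiagonal' fun i => jordanBlock F (d i)

/-- Similarity of square matrices, possibly indexed by different (finite) types:
both matrices represent the same linear endomorphism up to a linear change of basis. -/
def MatSimilar (F : Type*) [Field F] {n m : Type*} [Fintype n] [Fintype m]
    (A : Matrix n n F) (B : Matrix m m F) : Prop :=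
  ∃ e : (n → F) ≃ₗ[F] (m → F), ∀ v, e (A.mulVec v) = B.mulVec (e v)

/-- The `k × k` integer matrix whose `(i, j)` entry is the binomial coefficient
`C(r + s - 2k, s + i - j - k)`, where `C(a, b) = 0` if `b < 0` or `b > a`. -/
def Dmat (r s k : ℕ) : Matrix (Fin k) (Fin k) ℤ :=
  Matrix.of fun i j =>
    if (j : ℕ) + k ≤ s + (i : ℕ) then
      ((r + s - 2 * k).choose (s + (i : ℕ) - (j : ℕ) - k) : ℤ)
    else 0

/-- The determinant `D_k(r, s)`. -/
def Ddet (r s k : ℕ) : ℤ := (Dmat r s k).det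

namespace JordanTensor

open Finset

section Combinatorics

variable {n r : ℕ} {c : ℕ → ℕ}

lemma apply_eq_of_add_two_mul_le (hc : Antitone c)
    (hstep : ∀ m, c (m + 1) = c m ∨ c (m + 1) + c m + (m + 1) = n) {m t : ℕ} (hmt : m ≤ t)
    (ht : t + 2 * c m ≤ n) : c t = c m := by
  induction t, hmt using Nat.le_induction with
  | base => rfl
  | succ t _ ih =>
    have heq : c t = c m := ih (by omega)
    have hle : c (t + 1) ≤ c t := hc t.le_succ
    rcases hstep t with h | h <;> omega

lemma apply_sub_two_mul_eq_iff_mem_range (hc : Antitone c)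
    (hstep : ∀ m, c (m + 1) = c m ∨ c (m + 1) + c m + (m + 1) = n) {k : ℕ} (hk : 2 * k ≤ n) :
    c (n - 2 * k) = k ↔ k ∈ Set.range c := by
  refine ⟨fun h => ⟨_, h⟩, ?_⟩
  rintro ⟨m, rfl⟩
  induction m with
  | zero => exact apply_eq_of_add_two_mul_le hc hstep (Nat.zero_le _) (by omega)
  | succ m ih =>
    have hle : c (m + 1) ≤ c m := hc m.le_succ
    rcases hstep m with h | h
    · rw [h] at hk ⊢
      exact ih hk
    · exact apply_eq_of_add_two_mul_le hc hstep (by omega) (by omega)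

/-- The conjugate of the partition with parts `lam i`: the number of parts exceeding `m`. The
index is shifted by one from the usual convention, which counts the parts `≥ m`. -/
def conjugate {ι : Type*} [Fintype ι] (lam : ι → ℕ) (m : ℕ) : ℕ := #{i | m < lam i}

lemma conjugate_antitone {ι : Type*} [Fintype ι] (lam : ι → ℕ) : Antitone (conjugate lam) :=
  fun _ _ hmn => card_le_card fun _ hi =>
    mem_filter.2 ⟨mem_univ _, hmn.trans_lt (mem_filter.1 hi).2⟩

variable {lam : Fin r → ℕ}

lemma lt_conjugate_iff (hlam : Antitone lam) {i : Fin r} {m : ℕ} :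
    (i : ℕ) < conjugate lam m ↔ m < lam i := by
  constructor
  · contrapose!
    intro h
    have hsub : ({j | m < lam j} : Finset (Fin r)) ⊆ Iio i := fun j hj => by
      rw [mem_Iio]
      by_contra! hij
      exact absurd (mem_filter.1 hj).2 (not_lt.2 ((hlam hij).trans h))
    exact (card_le_card hsub).trans_eq (Fin.card_Iio i)
  · intro h
    have hsub : Iic i ⊆ ({j | m < lam j} : Finset (Fin r)) := fun j hj =>
      mem_filter.2 ⟨mem_univ _, h.trans_le (hlam (mem_Iic.1 hj))⟩
    have hcard : #(Iic i) ≤ conjugate lam m := card_le_card hsub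
    rwa [Fin.card_Iic, Nat.succ_le_iff] at hcard

lemma conjugate_apply_le (hlam : Antitone lam) (i : Fin r) : conjugate lam (lam i) ≤ i :=
  not_lt.1 fun h => lt_irrefl _ ((lt_conjugate_iff hlam).1 h)

lemma eq_succ_of_notMem_range_conjugate (hlam : Antitone lam) {i : ℕ} (hi : i + 1 < r)
    (h : i + 1 ∉ Set.range (conjugate lam)) : lam ⟨i, by omega⟩ = lam ⟨i + 1, hi⟩ := by
  refine le_antisymm (not_lt.1 fun hlt => h ⟨lam ⟨i + 1, hi⟩, ?_⟩) (hlam (by simp))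
  have hlower : i < conjugate lam (lam ⟨i + 1, hi⟩) :=
    (lt_conjugate_iff hlam (i := ⟨i, by omega⟩)).2 hlt
  have hupper : conjugate lam (lam ⟨i + 1, hi⟩) ≤ i + 1 := conjugate_apply_le hlam ⟨i + 1, hi⟩
  omega

lemma notMem_range_conjugate (hlam : Antitone lam) {i : Fin r} {j : ℕ}
    (hij : conjugate lam (lam i) < j) (hji : j ≤ i) : j ∉ Set.range (conjugate lam) := by
  rintro ⟨m, rfl⟩
  have hm : m < lam i :=
    lt_of_not_ge fun h => absurd (conjugate_antitone lam h) (not_le.2 hij)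
  exact absurd ((lt_conjugate_iff hlam).2 hm) (not_lt.2 hji)

lemma apply_add_conjugate_apply (hlam : Antitone lam)
    (hstep : ∀ m, conjugate lam (m + 1) = conjugate lam m ∨
      conjugate lam (m + 1) + conjugate lam m + (m + 1) = n)
    {i : Fin r} (hi : (i : ℕ) + 1 ∈ Set.range (conjugate lam)) :
    conjugate lam (lam i) + (i + 1) + lam i = n := by
  obtain ⟨m, hm⟩ := hi
  have hmi : m < lam i := (lt_conjugate_iff hlam).1 (by omega)
  have hle : conjugate lam (lam i) ≤ i := conjugate_apply_le hlam i
  obtain ⟨L, hL⟩ : ∃ L, lam i = L + 1 := ⟨lam i - 1, by omega⟩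
  have hlast : conjugate lam L = i + 1 := by
    have hlower : (i : ℕ) < conjugate lam L := (lt_conjugate_iff hlam).2 (by omega)
    have hupper : conjugate lam L ≤ conjugate lam m := conjugate_antitone lam (by omega)
    omega
  rw [hL] at hle ⊢
  rcases hstep L with h | h <;> omega

end Combinatorics

section RankDrop

variable {K V W : Type*} [Field K] [AddCommGroup V] [Module K V] [AddCommGroup W] [Module K W]

/-- The difference of the ranks of `T ^ m` and `T ^ (m + 1)`. For nilpotent `T` this is the number
of Jordan blocks of size greater than `m`. -/
noncomputable def rankDrop (T : Module.End K V) (m : ℕ) : ℕ :=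
  Module.finrank K (LinearMap.range (T ^ m)) - Module.finrank K (LinearMap.range (T ^ (m + 1)))

lemma rankDrop_eq_of_semiconj {T : Module.End K V} {T' : Module.End K W} (e : V ≃ₗ[K] W)
    (h : Function.Semiconj e T T') : rankDrop T = rankDrop T' := by
  have hrange (n : ℕ) : (LinearMap.range (T ^ n)).map e.toLinearMap = LinearMap.range (T' ^ n) := by
    have hpow : e.toLinearMap ∘ₗ (T ^ n) = (T' ^ n) ∘ₗ e.toLinearMap := LinearMap.ext fun v => by
      simpa only [LinearMap.comp_apply, LinearEquiv.coe_coe, Module.End.pow_apply] using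
        h.iterate_right n v
    rw [← LinearMap.range_comp, hpow, LinearEquiv.range_comp]
  funext m
  rw [rankDrop, rankDrop, ← hrange, ← hrange, e.finrank_map_eq, e.finrank_map_eq]

lemma finrank_range_eq_add_finrank_map_ker {Q : Type*} [FiniteDimensional K W] [AddCommGroup Q]
    [Module K Q] {φ : V →ₗ[K] W} {q : V →ₗ[K] Q} (hq : Function.Surjective q)
    (hφq : LinearMap.ker φ ≤ LinearMap.ker q) :
    Module.finrank K (LinearMap.range φ) =
      Module.finrank K Q + Module.finrank K ((LinearMap.ker q).map φ) := by
  let e : (V ⧸ LinearMap.ker φ) →ₗ[K] W := (LinearMap.ker φ).liftQ φ le_rfl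
  have he : Function.Injective e :=
    LinearMap.ker_eq_bot.1 (Submodule.ker_liftQ_eq_bot' _ φ rfl)
  have : FiniteDimensional K (V ⧸ LinearMap.ker φ) := FiniteDimensional.of_injective e he
  let q' : (V ⧸ LinearMap.ker φ) →ₗ[K] Q := (LinearMap.ker φ).liftQ q hφq
  have hq' : LinearMap.range q' = ⊤ := by rw [Submodule.range_liftQ, LinearMap.range_eq_top.2 hq]
  have hker : (LinearMap.ker q).map φ = (LinearMap.ker q').map e := by
    rw [Submodule.ker_liftQ, ← Submodule.map_comp, Submodule.liftQ_mkQ]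
  rw [φ.quotKerEquivRange.symm.finrank_eq, hker,
    ← (Submodule.equivMapOfInjective e he _).finrank_eq,
    ← LinearMap.finrank_range_add_finrank_ker q', hq', finrank_top]

end RankDrop

section BlockRanks

variable {F : Type*} [Field F]

lemma jordanBlock_mulVec {R : Type*} [NonAssocSemiring R] {m : ℕ} (w : Fin m → R) (i : Fin m) :
    (jordanBlock R m).mulVec w i = w i + if h : (i : ℕ) + 1 < m then w ⟨i + 1, h⟩ else 0 := by
  have hentry (j : Fin m) : jordanBlock R m i j * w j =
      (if j = i then w j else 0) + if (j : ℕ) = i + 1 then w j else 0 := by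
    simp only [jordanBlock, Matrix.of_apply, ite_mul, one_mul, zero_mul, Fin.ext_iff]
    split_ifs <;> first | omega | simp
  simp only [Matrix.mulVec, dotProduct, hentry, sum_add_distrib, sum_ite_eq', mem_univ, if_true]
  congr 1
  split_ifs with h
  · simpa [Fin.ext_iff] using sum_ite_eq' univ (⟨i + 1, h⟩ : Fin m) w
  · exact sum_eq_zero fun j _ => if_neg (by omega)

variable {ι : Type} [Fintype ι] [DecidableEq ι] (lam : ι → ℕ)

/-- The nilpotent part `B - 1` of the block-diagonal matrix `B` with blocks `J_{lam i}`. -/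
noncomputable def blockNilpotent (F : Type*) [Field F] {ι : Type} [Fintype ι] [DecidableEq ι]
    (lam : ι → ℕ) : Module.End F (((i : ι) × Fin (lam i)) → F) :=
  Matrix.toLin' (jordanBlockDiag F lam) - 1

lemma jordanBlockDiag_mulVec (w : ((i : ι) × Fin (lam i)) → F) (i : ι) (j : Fin (lam i)) :
    (jordanBlockDiag F lam).mulVec w ⟨i, j⟩ =
      (jordanBlock F (lam i)).mulVec (fun j' => w ⟨i, j'⟩) j := by
  simp only [Matrix.mulVec, dotProduct]
  rw [Fintype.sum_sigma, sum_eq_single i _ (by simp)]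
  · simp only [jordanBlockDiag, Matrix.blockDiagonal'_apply_eq]
  · intro i' _ hne
    refine sum_eq_zero fun j' _ => ?_
    rw [jordanBlockDiag, Matrix.blockDiagonal'_apply_ne _ _ _ hne.symm, zero_mul]

lemma blockNilpotent_pow_apply (m : ℕ) (w : ((i : ι) × Fin (lam i)) → F) (i : ι)
    (j : Fin (lam i)) : (blockNilpotent F lam ^ m) w ⟨i, j⟩ =
      if h : (j : ℕ) + m < lam i then w ⟨i, ⟨j + m, h⟩⟩ else 0 := by
  induction m generalizing j with
  | zero => simp
  | succ m ih =>
    have hshift (v : ((i : ι) × Fin (lam i)) → F) : blockNilpotent F lam v ⟨i, j⟩ =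
        if h : (j : ℕ) + 1 < lam i then v ⟨i, ⟨j + 1, h⟩⟩ else 0 := by
      simp [blockNilpotent, jordanBlockDiag_mulVec, jordanBlock_mulVec]
    rw [pow_succ', Module.End.mul_apply, hshift]
    simp only [ih, add_assoc, add_comm 1 m]
    split_ifs <;> first | rfl | omega

lemma ker_blockNilpotent_pow (m : ℕ) : LinearMap.ker (blockNilpotent F lam ^ m) =
    ⨅ x ∈ {x : (i : ι) × Fin (lam i) | (x.2 : ℕ) < m}ᶜ,
      LinearMap.ker (LinearMap.proj x : (((i : ι) × Fin (lam i)) → F) →ₗ[F] F) := by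
  ext w
  simp only [Submodule.mem_iInf, LinearMap.mem_ker, LinearMap.proj_apply, Set.mem_compl_iff,
    Set.mem_ofPred_eq, not_lt]
  constructor
  · rintro hw ⟨i, j⟩ (hx : m ≤ j)
    have hshift := congrFun hw ⟨i, ⟨j - m, by omega⟩⟩
    rw [blockNilpotent_pow_apply, dif_pos (by simp only []; omega)] at hshift
    simpa [Nat.sub_add_cancel hx] using hshift
  · intro hw
    funext ⟨i, j⟩
    rw [blockNilpotent_pow_apply]
    split_ifs with h
    · exact hw _ (by simp)
    · rfl

lemma finrank_ker_blockNilpotent_pow (m : ℕ) :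
    Module.finrank F (LinearMap.ker (blockNilpotent F lam ^ m)) = ∑ i, min (lam i) m := by
  classical
  rw [ker_blockNilpotent_pow, (LinearMap.iInfKerProjEquiv F
    (fun _ : (i : ι) × Fin (lam i) => F) disjoint_compl_right (by simp)).finrank_eq,
    Module.finrank_fintype_fun_eq_card, Fintype.card_subtype]
  simp only [Set.mem_ofPred_eq, card_filter, Fintype.sum_sigma]
  simp only [← card_filter, Fin.card_filter_val_lt]

lemma rankDrop_blockNilpotent : rankDrop (blockNilpotent F lam) = conjugate lam := by
  funext m
  have hm := LinearMap.finrank_range_add_finrank_ker (blockNilpotent F lam ^ m)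
  have hsucc := LinearMap.finrank_range_add_finrank_ker (blockNilpotent F lam ^ (m + 1))
  have hker : ∑ i, min (lam i) (m + 1) = ∑ i, min (lam i) m + conjugate lam m := by
    rw [conjugate, card_filter, ← sum_add_distrib]
    refine sum_congr rfl fun i _ => ?_
    split_ifs <;> omega
  rw [finrank_ker_blockNilpotent_pow] at hm hsucc
  rw [rankDrop]
  omega

end BlockRanks

section Homogeneous

open MvPolynomial

attribute [local instance] MvPolynomial.gradedAlgebra

variable {σ R : Type*} [CommRing R] {f g q : MvPolynomial σ R} {m n : ℕ}

lemma homogeneousComponent_add_mul (hf : f.IsHomogeneous m) (n : ℕ) (q : MvPolynomial σ R) :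
    homogeneousComponent (m + n) (f * q) = f * homogeneousComponent n q := by
  rw [← decomposition.decompose'_apply, ← decomposition.decompose'_apply]
  exact DirectSum.coe_decompose_mul_add_of_left_mem (homogeneousSubmodule σ R) hf

lemma homogeneousComponent_mul_of_lt (hf : f.IsHomogeneous m) (hn : n < m)
    (q : MvPolynomial σ R) : homogeneousComponent n (f * q) = 0 := by
  rw [← decomposition.decompose'_apply]
  exact DirectSum.coe_decompose_mul_of_left_mem_of_not_le (homogeneousSubmodule σ R) hf
    (not_le.2 hn)

lemma isHomogeneous_of_mul_left [IsDomain R] (hf : f.IsHomogeneous m) (hf0 : f ≠ 0)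
    (hfq : (f * q).IsHomogeneous (m + n)) : q.IsHomogeneous n := by
  have hcomp := homogeneousComponent_add_mul hf n q
  rw [homogeneousComponent_eq_self hfq] at hcomp
  rw [mul_left_cancel₀ hf0 hcomp]
  exact homogeneousComponent_isHomogeneous n q

lemma eq_zero_of_mem_span_pair_of_lt (hf : f.IsHomogeneous m) (hg : g.IsHomogeneous n)
    {h : MvPolynomial σ R} {d : ℕ} (hh : h.IsHomogeneous d) (hm : d < m) (hn : d < n)
    (hmem : h ∈ Ideal.span {f, g}) : h = 0 := by
  obtain ⟨u, v, rfl⟩ := Ideal.mem_span_pair.1 hmem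
  rw [← homogeneousComponent_eq_self hh, map_add, mul_comm u, mul_comm v,
    homogeneousComponent_mul_of_lt hf hm, homogeneousComponent_mul_of_lt hg hn, add_zero]

end Homogeneous

lemma mul_mem_span_pair_mul_iff {R : Type*} [CommRing R] [IsDomain R] {z f g h : R}
    (hz : Prime z) (hzf : ¬ z ∣ f) :
    z * h ∈ Ideal.span {f, z * g} ↔ h ∈ Ideal.span {f, g} := by
  simp only [Ideal.mem_span_pair]
  constructor
  · rintro ⟨u, v, huv⟩
    obtain ⟨t, rfl⟩ : z ∣ u :=
      (hz.dvd_or_dvd ⟨h - v * g, by linear_combination huv⟩).resolve_right hzf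
    exact ⟨t, v, mul_left_cancel₀ hz.ne_zero (by linear_combination huv)⟩
  · rintro ⟨u, v, rfl⟩
    exact ⟨z * u, v, by ring⟩

section Restriction

open MvPolynomial

/-- The linear form `x + y`. On `R[x, y] / (x ^ r, y ^ s)`, multiplication by it is the nilpotent
part of `J_r ⊗ J_s` up to an automorphism. -/
noncomputable def zForm (R : Type*) [CommRing R] : MvPolynomial (Fin 2) R := X 0 + X 1

/-- Restriction of polynomials in `x, y` to the line `x + y = 0`, parametrized by `(X, -X)`. -/
noncomputable def restrict (R : Type*) [CommRing R] : MvPolynomial (Fin 2) R →ₐ[R] Polynomial R :=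
  aeval ![Polynomial.X, -Polynomial.X]

variable {R : Type*} [CommRing R]

lemma zForm_isHomogeneous : (zForm R).IsHomogeneous 1 :=
  (isHomogeneous_X R 0).add (isHomogeneous_X R 1)

@[simp] lemma restrict_X_zero : restrict R (X 0) = Polynomial.X := by simp [restrict]

@[simp] lemma restrict_X_one : restrict R (X 1) = -Polynomial.X := by simp [restrict]

@[simp] lemma restrict_zForm : restrict R (zForm R) = 0 := by simp [zForm]

lemma restrict_C (α : R) : restrict R (C α) = Polynomial.C α := (restrict R).commutes α

lemma restrict_aeval_X_zero (q : Polynomial R) :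
    restrict R (Polynomial.aeval (X 0) q) = q := by
  rw [← Polynomial.aeval_algHom_apply, restrict_X_zero, Polynomial.aeval_X_left_apply]

lemma restrict_surjective : Function.Surjective (restrict R) :=
  fun q => ⟨_, restrict_aeval_X_zero q⟩

lemma restrict_eq_zero_iff {h : MvPolynomial (Fin 2) R} : restrict R h = 0 ↔ zForm R ∣ h := by
  refine ⟨fun hh => ?_, fun ⟨q, hq⟩ => by rw [hq, map_mul, restrict_zForm, zero_mul]⟩
  let π := Ideal.Quotient.mkₐ R (Ideal.span {zForm R})
  have hπ : π = (π.comp (Polynomial.aeval (X 0))).comp (restrict R) := by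
    ext i
    fin_cases i
    · simp
    · have hz : π (X 0 + X 1) = 0 :=
        Ideal.Quotient.eq_zero_iff_mem.2 (Ideal.mem_span_singleton_self (zForm R))
      rw [map_add] at hz
      simpa using eq_neg_of_add_eq_zero_right hz
  have hπh : π h = 0 := by rw [hπ, AlgHom.comp_apply, hh, map_zero]
  exact Ideal.mem_span_singleton.1 (Ideal.Quotient.eq_zero_iff_mem.1 hπh)

lemma zForm_ne_zero [Nontrivial R] : zForm R ≠ 0 := fun h => by
  simpa [zForm] using congrArg (aeval (R := R) ![(1 : R), 0]) h

lemma prime_zForm [IsDomain R] : Prime (zForm R) := by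
  rw [← Ideal.span_singleton_prime zForm_ne_zero]
  have hker : RingHom.ker (restrict R) = Ideal.span {zForm R} := by
    ext h
    rw [RingHom.mem_ker, restrict_eq_zero_iff, Ideal.mem_span_singleton]
  exact hker ▸ RingHom.ker_isPrime (restrict R)

lemma exists_restrict_eq_of_isHomogeneous {f : MvPolynomial (Fin 2) R} {a : ℕ}
    (hf : f.IsHomogeneous a) : ∃ α : R, restrict R f = Polynomial.C α * Polynomial.X ^ a := by
  refine ⟨∑ d ∈ f.support, coeff d f * (-1) ^ d 1, ?_⟩
  conv_lhs => rw [f.as_sum]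
  rw [map_sum, map_sum, sum_mul]
  refine sum_congr rfl fun d hd => ?_
  have hdeg : d 0 + d 1 = a := by
    simpa [Finsupp.weight_apply, Finsupp.sum_fintype] using hf (mem_support_iff.1 hd)
  rw [restrict, aeval_monomial, ← hdeg, Finsupp.prod_fintype _ _ (by simp)]
  simp only [Fin.prod_univ_two, Matrix.cons_val_zero, Matrix.cons_val_one, map_mul, map_pow,
    map_neg, map_one, Polynomial.algebraMap_eq, neg_pow (Polynomial.X : Polynomial R)]
  ring

lemma eq_zero_of_restrict_eq_zero {g : MvPolynomial (Fin 2) R}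
    (hg : g.IsHomogeneous 0) (h : restrict R g = 0) : g = 0 := by
  rw [totalDegree_eq_zero_iff_eq_C.1 (Nat.le_zero.1 hg.totalDegree_le), restrict_C,
    Polynomial.C_eq_zero] at h
  rw [totalDegree_eq_zero_iff_eq_C.1 (Nat.le_zero.1 hg.totalDegree_le), h, map_zero]

lemma isUnit_of_dvd_X_pow_of_dvd_X_pow [IsDomain R] {σ : Type*} {i j : σ} (hij : i ≠ j)
    {f : MvPolynomial σ R} {r s : ℕ} (hi : f ∣ X i ^ r) (hj : f ∣ X j ^ s) : IsUnit f := by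
  obtain ⟨k, -, hk⟩ := (dvd_prime_pow (X_prime (i := i)) r).1 hi
  obtain _ | k := k
  · exact hk.symm.isUnit (by simp)
  · have hdvd : (X i : MvPolynomial σ R) ∣ X j ^ s :=
      ((dvd_pow_self _ k.succ_ne_zero).trans hk.symm.dvd).trans hj
    exact absurd (X_dvd_X.1 ((X_prime (i := i)).dvd_of_dvd_pow hdvd)) hij

end Restriction

section TruncatedAlgebra

open MvPolynomial

/-- The ideal `(x ^ r, y ^ s)` of `R[x, y]`. -/
noncomputable def truncIdeal (R : Type*) [CommRing R] (r s : ℕ) : Ideal (MvPolynomial (Fin 2) R) :=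
  Ideal.span {X 0 ^ r, X 1 ^ s}

/-- The algebra `R[x, y] / (x ^ r, y ^ s)`, which carries the action of `J_r ⊗ J_s`. -/
abbrev TruncAlg (R : Type*) [CommRing R] (r s : ℕ) : Type _ :=
  MvPolynomial (Fin 2) R ⧸ truncIdeal R r s

/-- Multiplication by `x + y` on `R[x, y] / (x ^ r, y ^ s)`. -/
noncomputable def mulZ (R : Type*) [CommRing R] (r s : ℕ) : Module.End R (TruncAlg R r s) :=
  LinearMap.mulLeft R (Ideal.Quotient.mk _ (zForm R))

/-- The exponent vector of the monomial `x ^ i * y ^ j`. -/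
noncomputable def bideg (i j : ℕ) : Fin 2 →₀ ℕ := Finsupp.single 0 i + Finsupp.single 1 j

/-- Coordinates modulo `(x ^ r, y ^ s)`. The exponents are reversed because Jordan blocks with ones
on the superdiagonal lower the index of a basis vector, whereas `x` and `y` raise exponents. -/
noncomputable def coords (R : Type*) [CommRing R] (r s : ℕ) :
    MvPolynomial (Fin 2) R →ₗ[R] (Fin r × Fin s → R) :=
  LinearMap.pi fun ij => lcoeff R (bideg ij.1.rev ij.2.rev)

variable {R : Type*} [CommRing R] {r s : ℕ}

lemma X_zero_pow_mem_truncIdeal (r s : ℕ) : X 0 ^ r ∈ truncIdeal R r s :=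
  Ideal.subset_span (Set.mem_insert _ _)

lemma X_one_pow_mem_truncIdeal (r s : ℕ) : X 1 ^ s ∈ truncIdeal R r s :=
  Ideal.subset_span (Set.mem_insert_of_mem _ rfl)

lemma mulZ_pow_mk (m : ℕ) (h : MvPolynomial (Fin 2) R) :
    (mulZ R r s ^ m) (Ideal.Quotient.mk _ h) = Ideal.Quotient.mk _ (zForm R ^ m * h) := by
  rw [mulZ, LinearMap.pow_mulLeft, LinearMap.mulLeft_apply, map_mul, map_pow]

lemma mulZ_pow_eq_zero {m : ℕ} (hm : r + s ≤ m + 1) : mulZ R r s ^ m = 0 := by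
  have hz : zForm R ^ m ∈ truncIdeal R r s :=
    Ideal.add_pow_mem_of_pow_mem_of_le _ (X_zero_pow_mem_truncIdeal r s)
      (X_one_pow_mem_truncIdeal r s) hm
  rw [mulZ, LinearMap.pow_mulLeft, ← map_pow, Ideal.Quotient.eq_zero_iff_mem.2 hz,
    LinearMap.mulLeft_zero_eq_zero]

@[simp] lemma bideg_apply_zero (i j : ℕ) : bideg i j 0 = i := by simp [bideg]

@[simp] lemma bideg_apply_one (i j : ℕ) : bideg i j 1 = j := by simp [bideg]

lemma bideg_le_iff {d : Fin 2 →₀ ℕ} {i j : ℕ} : bideg i j ≤ d ↔ i ≤ d 0 ∧ j ≤ d 1 := by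
  simp [Finsupp.le_def]

lemma bideg_eq_iff {d : Fin 2 →₀ ℕ} {i j : ℕ} : bideg i j = d ↔ i = d 0 ∧ j = d 1 := by
  simp [Finsupp.ext_iff]

lemma bideg_self (d : Fin 2 →₀ ℕ) : bideg (d 0) (d 1) = d := bideg_eq_iff.2 ⟨rfl, rfl⟩

lemma bideg_sub (i j i' j' : ℕ) : bideg i j - bideg i' j' = bideg (i - i') (j - j') := by
  simp [eq_comm, bideg_eq_iff]

lemma degree_bideg (i j : ℕ) : (bideg i j).degree = i + j := by simp [bideg]

lemma monomial_bideg (i j : ℕ) (α : R) :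
    monomial (bideg i j) α = C α * (X 0 ^ i * X 1 ^ j) := by
  simp [monomial_eq, Finsupp.prod_fintype]

lemma mem_truncIdeal_iff {h : MvPolynomial (Fin 2) R} :
    h ∈ truncIdeal R r s ↔ ∀ i < r, ∀ j < s, coeff (bideg i j) h = 0 := by
  have hspan : truncIdeal R r s =
      Ideal.span ((fun d => monomial d (1 : R)) '' {bideg r 0, bideg 0 s}) := by
    rw [truncIdeal, Set.image_pair]
    simp [monomial_bideg]
  simp only [hspan, mem_ideal_span_monomial_image, mem_support_iff, Set.mem_insert_iff,
    Set.mem_singleton_iff, exists_eq_or_imp, exists_eq_left, bideg_le_iff, zero_le, and_true,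
    true_and]
  constructor
  · intro H i hi j hj
    by_contra hne
    have hd := H _ hne
    simp only [bideg_apply_zero, bideg_apply_one] at hd
    omega
  · intro H d hd
    by_contra! hlt
    exact hd (bideg_self d ▸ H _ hlt.1 _ hlt.2)

lemma coords_apply (h : MvPolynomial (Fin 2) R) (ij : Fin r × Fin s) :
    coords R r s h ij = coeff (bideg ij.1.rev ij.2.rev) h := rfl

lemma ker_coords : LinearMap.ker (coords R r s) = (truncIdeal R r s).restrictScalars R := by
  ext h
  rw [LinearMap.mem_ker, Submodule.restrictScalars_mem, mem_truncIdeal_iff, funext_iff,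
    Prod.forall]
  constructor
  · intro H i hi j hj
    simpa only [coords_apply, Fin.rev_rev, Pi.zero_apply] using
      H (Fin.rev ⟨i, hi⟩) (Fin.rev ⟨j, hj⟩)
  · exact fun H i j => H _ i.rev.isLt _ j.rev.isLt

lemma coords_surjective : Function.Surjective (coords R r s) := fun v => by
  refine ⟨∑ ij, monomial (bideg ij.1.rev ij.2.rev) (v ij), funext fun ij => ?_⟩
  simp only [coords_apply, coeff_sum, coeff_monomial, bideg_eq_iff, bideg_apply_zero,
    bideg_apply_one, Fin.val_inj, Fin.rev_inj, ← Prod.ext_iff, sum_ite_eq', mem_univ, if_true]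

/-- `R[x, y] / (x ^ r, y ^ s)` in the reversed monomial basis. -/
noncomputable def coordsEquiv (R : Type*) [CommRing R] (r s : ℕ) :
    TruncAlg R r s ≃ₗ[R] (Fin r × Fin s → R) :=
  (Submodule.Quotient.restrictScalarsEquiv R (truncIdeal R r s)).symm ≪≫ₗ
    Submodule.quotEquivOfEq _ _ ker_coords.symm ≪≫ₗ
      (coords R r s).quotKerEquivOfSurjective coords_surjective

lemma coordsEquiv_mk (h : MvPolynomial (Fin 2) R) :
    coordsEquiv R r s (Ideal.Quotient.mk _ h) = coords R r s h := rfl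

instance : Module.Finite R (TruncAlg R r s) := .equiv (coordsEquiv R r s).symm

end TruncatedAlgebra

section ColonIdeals

open MvPolynomial

variable {F : Type*} [Field F] {r s m a b : ℕ} {f g : MvPolynomial (Fin 2) F}

/-- A pair of forms of degrees `a` and `b` in which the second is a multiple of `x + y` and the
first is normalized to restrict to `X ^ a` on the line `x + y = 0`. -/
structure ReducedPair (a b : ℕ) (f g : MvPolynomial (Fin 2) F) : Prop where
  isHomogeneous_left : f.IsHomogeneous a
  isHomogeneous_right : g.IsHomogeneous b
  restrict_left : restrict F f = Polynomial.X ^ a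
  restrict_right : restrict F g = 0

lemma exists_reducedPair_of_dvd (hf : f.IsHomogeneous a) (hg : g.IsHomogeneous b)
    (hfX : restrict F f = Polynomial.X ^ a) (hdvd : Polynomial.X ^ a ∣ restrict F g) :
    ∃ g', Ideal.span {f, g'} = Ideal.span {f, g} ∧ ReducedPair a b f g' := by
  obtain ⟨β, hβ⟩ := exists_restrict_eq_of_isHomogeneous hg
  obtain ⟨w, hw, hgw⟩ : ∃ w, (f * w).IsHomogeneous b ∧ restrict F (f * w) = restrict F g := by
    obtain rfl | hβ0 := eq_or_ne β 0
    · exact ⟨0, by simpa using isHomogeneous_zero _ _ b, by simp [hβ]⟩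
    · have hab : a ≤ b := by
        rw [hβ, (Polynomial.isUnit_C.2 hβ0.isUnit).dvd_mul_left] at hdvd
        exact (pow_dvd_pow_iff Polynomial.X_ne_zero Polynomial.not_isUnit_X).1 hdvd
      refine ⟨C β * X 0 ^ (b - a), ?_, ?_⟩
      · simpa [hab] using hf.mul (isHomogeneous_C_mul_X_pow β (0 : Fin 2) (b - a))
      · rw [map_mul, map_mul, map_pow, restrict_C, restrict_X_zero, hfX, hβ, mul_left_comm,
          ← pow_add, Nat.add_sub_cancel' hab]
  exact ⟨g - f * w, Ideal.span_pair_sub_left_mul _ _ _, hf, hg.sub hw, hfX,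
    by rw [map_sub, hgw, sub_self]⟩

lemma exists_reducedPair (hf : f.IsHomogeneous a) (hg : g.IsHomogeneous b)
    (hfX : restrict F f = Polynomial.X ^ a) :
    ∃ f' g', Ideal.span {f', g'} = Ideal.span {f, g} ∧
      (ReducedPair a b f' g' ∨ ReducedPair b a f' g') := by
  by_cases hdvd : Polynomial.X ^ a ∣ restrict F g
  · obtain ⟨g', hspan, hred⟩ := exists_reducedPair_of_dvd hf hg hfX hdvd
    exact ⟨f, g', hspan, Or.inl hred⟩
  obtain ⟨β, hβ⟩ := exists_restrict_eq_of_isHomogeneous hg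
  have hβ0 : β ≠ 0 := by
    rintro rfl
    simp [hβ] at hdvd
  have hba : b ≤ a := by
    contrapose! hdvd
    exact hβ ▸ (pow_dvd_pow _ hdvd.le).mul_left _
  have hgX : restrict F (C β⁻¹ * g) = Polynomial.X ^ b := by
    rw [map_mul, restrict_C, hβ, ← mul_assoc, ← Polynomial.C_mul, inv_mul_cancel₀ hβ0, map_one,
      one_mul]
  obtain ⟨f', hspan, hred⟩ := exists_reducedPair_of_dvd (hg.C_mul β⁻¹) hf hgX
    (hfX ▸ pow_dvd_pow _ hba)
  refine ⟨C β⁻¹ * g, f', ?_, Or.inr hred⟩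
  rw [hspan, Ideal.span_pair_comm, Ideal.span_insert, Ideal.span_insert f,
    Ideal.span_singleton_mul_left_unit ((IsUnit.mk0 _ (inv_ne_zero hβ0)).map C)]

/-- The reduced pair `f, g` of degrees `a`, `b` generates the colon ideal
`(x ^ r, y ^ s) : (x + y) ^ m`, and `a + b = r + s - m`. -/
structure ColonGens (r s m a b : ℕ) (f g : MvPolynomial (Fin 2) F) : Prop
    extends ReducedPair a b f g where
  degree_add : a + b + m = r + s
  mem_iff : ∀ h, zForm F ^ m * h ∈ truncIdeal F r s ↔ h ∈ Ideal.span {f, g}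

lemma exists_colonGens_zero (F : Type*) [Field F] (hrs : r ≤ s) :
    ∃ f g : MvPolynomial (Fin 2) F, ColonGens r s 0 r s f g := by
  obtain ⟨g, hspan, hred⟩ := exists_reducedPair_of_dvd (isHomogeneous_X_pow (R := F) (0 : Fin 2) r)
    (isHomogeneous_X_pow (R := F) (1 : Fin 2) s) (by simp)
    (by
      simpa [neg_pow (Polynomial.X : Polynomial F)] using (pow_dvd_pow Polynomial.X hrs).mul_left _)
  exact ⟨_, g, hred, by omega, fun h => by rw [pow_zero, one_mul, hspan, truncIdeal]⟩

namespace ColonGens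

lemma truncIdeal_le (H : ColonGens r s m a b f g) : truncIdeal F r s ≤ Ideal.span {f, g} :=
  fun _ hh => (H.mem_iff _).1 (Ideal.mul_mem_left _ _ hh)

lemma left_degree_eq_zero (H : ColonGens r s m a b f g) (hg : g = 0) : a = 0 := by
  have hdvd {h : MvPolynomial (Fin 2) F} (hh : h ∈ truncIdeal F r s) : f ∣ h := by
    simpa [hg, Ideal.span_insert, Ideal.mem_span_singleton] using H.truncIdeal_le hh
  have hf : IsUnit f := isUnit_of_dvd_X_pow_of_dvd_X_pow (i := (0 : Fin 2)) (j := 1) (by simp)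
    (hdvd (X_zero_pow_mem_truncIdeal r s)) (hdvd (X_one_pow_mem_truncIdeal r s))
  have hX := hf.map (restrict F)
  rw [H.restrict_left] at hX
  by_contra ha
  exact Polynomial.not_isUnit_X ((isUnit_pow_iff ha).1 hX)

lemma right_degree_pos (H : ColonGens r s m a b f g) (hm : m < r + s) : 0 < b := by
  rw [Nat.pos_iff_ne_zero]
  rintro rfl
  have ha := H.left_degree_eq_zero
    (eq_zero_of_restrict_eq_zero H.isHomogeneous_right H.restrict_right)
  have hdeg := H.degree_add
  omega

/-- A step of Euclid's algorithm: dividing `g` by `x + y` gives generators of the next colon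
ideal, which are then reduced by subtracting a multiple of one from the other. -/
lemma exists_succ (H : ColonGens r s m a b f g) (hm : m < r + s) :
    ∃ f' g' : MvPolynomial (Fin 2) F,
      ColonGens r s (m + 1) a (b - 1) f' g' ∨ ColonGens r s (m + 1) (b - 1) a f' g' := by
  have hb : 1 + (b - 1) = b := Nat.add_sub_cancel' (H.right_degree_pos hm)
  obtain ⟨q, rfl⟩ := restrict_eq_zero_iff.1 H.restrict_right
  have hq : q.IsHomogeneous (b - 1) := isHomogeneous_of_mul_left zForm_isHomogeneous zForm_ne_zero
    (hb.symm ▸ H.isHomogeneous_right)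
  have hzf : ¬ zForm F ∣ f := by
    rw [← restrict_eq_zero_iff, H.restrict_left]
    exact pow_ne_zero _ Polynomial.X_ne_zero
  obtain ⟨f', g', hspan, hred⟩ := exists_reducedPair H.isHomogeneous_left hq H.restrict_left
  have hmem (h : MvPolynomial (Fin 2) F) :
      zForm F ^ (m + 1) * h ∈ truncIdeal F r s ↔ h ∈ Ideal.span {f', g'} := by
    rw [pow_succ, mul_assoc, H.mem_iff, mul_mem_span_pair_mul_iff prime_zForm hzf, hspan]
  have hdeg := H.degree_add
  exact ⟨f', g', hred.imp (⟨·, by omega, hmem⟩) (⟨·, by omega, hmem⟩)⟩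

end ColonGens

lemma exists_colonGens (F : Type*) [Field F] (hrs : r ≤ s) (hm : m ≤ r + s) :
    ∃ a b, ∃ f g : MvPolynomial (Fin 2) F, ColonGens r s m a b f g := by
  induction m with
  | zero => exact ⟨r, s, exists_colonGens_zero F hrs⟩
  | succ m ih =>
    obtain ⟨a, b, f, g, H⟩ := ih (by omega)
    obtain ⟨f', g', H' | H'⟩ := H.exists_succ hm
    exacts [⟨_, _, _, _, H'⟩, ⟨_, _, _, _, H'⟩]

lemma ColonGens.exists_ne_zero_iff (H : ColonGens r s m a b f g) {d : ℕ} :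
    (∃ h : MvPolynomial (Fin 2) F, h ≠ 0 ∧ h.IsHomogeneous d ∧
      zForm F ^ m * h ∈ truncIdeal F r s) ↔ a ≤ d ∨ b ≤ d := by
  simp only [H.mem_iff]
  constructor
  · rintro ⟨h, h0, hd, hmem⟩
    contrapose! h0
    exact eq_zero_of_mem_span_pair_of_lt H.isHomogeneous_left H.isHomogeneous_right hd h0.1 h0.2
      hmem
  · have hf : f ≠ 0 := by
      rintro rfl
      exact pow_ne_zero _ Polynomial.X_ne_zero (H.restrict_left.symm.trans (map_zero _))
    have hX (n : ℕ) : (X 0 ^ n : MvPolynomial (Fin 2) F) ≠ 0 := pow_ne_zero n (X_ne_zero 0)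
    intro hd
    obtain had | hda := le_or_gt a d
    · refine ⟨f * X 0 ^ (d - a), mul_ne_zero hf (hX _), ?_, ?_⟩
      · simpa [had] using H.isHomogeneous_left.mul (isHomogeneous_X_pow (0 : Fin 2) (d - a))
      · exact Ideal.mul_mem_right _ _ (Ideal.subset_span (by simp))
    · have hbd : b ≤ d := hd.resolve_left (not_le.2 hda)
      have hg : g ≠ 0 := fun h => (Nat.zero_le d).not_gt (H.left_degree_eq_zero h ▸ hda)
      refine ⟨g * X 0 ^ (d - b), mul_ne_zero hg (hX _), ?_, ?_⟩
      · simpa [hbd] using H.isHomogeneous_right.mul (isHomogeneous_X_pow (0 : Fin 2) (d - b))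
      · exact Ideal.mul_mem_right _ _ (Ideal.subset_span (by simp))

end ColonIdeals

section ColonRanks

open MvPolynomial

variable {F : Type*} [Field F] {r s m a b : ℕ} {f g : MvPolynomial (Fin 2) F}

namespace ColonGens

lemma X_pow_dvd_restrict (H : ColonGens r s m a b f g) {h : MvPolynomial (Fin 2) F}
    (hh : h ∈ Ideal.span {f, g}) : Polynomial.X ^ a ∣ restrict F h := by
  obtain ⟨u, v, rfl⟩ := Ideal.mem_span_pair.1 hh
  rw [map_add, map_mul, map_mul, H.restrict_left, H.restrict_right, mul_zero, add_zero]
  exact dvd_mul_left _ _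

lemma exists_sub_mem_truncIdeal (H : ColonGens r s m a b f g) {h : MvPolynomial (Fin 2) F}
    (hh : Polynomial.X ^ a ∣ restrict F h) :
    ∃ t, zForm F ^ m * h - zForm F ^ (m + 1) * t ∈ truncIdeal F r s := by
  obtain ⟨P, hP⟩ := hh
  obtain ⟨u, rfl⟩ := restrict_surjective P
  obtain ⟨t, ht⟩ : zForm F ∣ h - f * u := by
    rw [← restrict_eq_zero_iff, map_sub, map_mul, H.restrict_left, hP, sub_self]
  refine ⟨t, ?_⟩
  rw [pow_succ, mul_assoc, ← mul_sub, ← ht, sub_sub_cancel, H.mem_iff]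
  exact Ideal.mul_mem_right _ _ (Ideal.subset_span (by simp))

/-- The images of consecutive powers of `x + y` have quotient
`F[x, y] / (x + y, f, g) = F[X] / (X ^ a)`. -/
lemma rankDrop_mulZ (H : ColonGens r s m a b f g) : rankDrop (mulZ F r s) m = a := by
  let I : Ideal (Polynomial F) := Ideal.span {Polynomial.X ^ a}
  let φ : MvPolynomial (Fin 2) F →ₗ[F] TruncAlg F r s :=
    (mulZ F r s ^ m) ∘ₗ (Ideal.Quotient.mkₐ F (truncIdeal F r s)).toLinearMap
  let q : MvPolynomial (Fin 2) F →ₗ[F] Polynomial F ⧸ I :=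
    ((Ideal.Quotient.mkₐ F I).comp (restrict F)).toLinearMap
  have hφ (h) : φ h = Ideal.Quotient.mk _ (zForm F ^ m * h) := mulZ_pow_mk m h
  have hq (h) : h ∈ LinearMap.ker q ↔ Polynomial.X ^ a ∣ restrict F h :=
    Ideal.Quotient.eq_zero_iff_mem.trans Ideal.mem_span_singleton
  have hφq : LinearMap.ker φ ≤ LinearMap.ker q := fun h hh => by
    rw [LinearMap.mem_ker, hφ, Ideal.Quotient.eq_zero_iff_mem, H.mem_iff] at hh
    exact (hq h).2 (H.X_pow_dvd_restrict hh)
  have hmap : (LinearMap.ker q).map φ = LinearMap.range (mulZ F r s ^ (m + 1)) := by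
    apply le_antisymm
    · rintro _ ⟨h, hh, rfl⟩
      obtain ⟨t, ht⟩ := H.exists_sub_mem_truncIdeal ((hq h).1 hh)
      exact ⟨Ideal.Quotient.mk _ t, by rw [mulZ_pow_mk, hφ, Ideal.Quotient.eq.2 ht]⟩
    · rintro _ ⟨x, rfl⟩
      obtain ⟨t, rfl⟩ := Ideal.Quotient.mk_surjective x
      exact ⟨zForm F * t, (hq _).2 (by simp), by rw [hφ, mulZ_pow_mk, pow_succ, mul_assoc]⟩
  have hrange : LinearMap.range φ = LinearMap.range (mulZ F r s ^ m) :=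
    LinearMap.range_comp_of_range_eq_top _
      (LinearMap.range_eq_top.2 (Ideal.Quotient.mkₐ_surjective F _))
  have hrank := finrank_range_eq_add_finrank_map_ker
    ((Ideal.Quotient.mkₐ_surjective F I).comp restrict_surjective) hφq
  rw [hrange, hmap, finrank_quotient_span_eq_natDegree, Polynomial.natDegree_X_pow] at hrank
  rw [rankDrop, hrank, Nat.add_sub_cancel]

end ColonGens

lemma rankDrop_mulZ_zero (F : Type*) [Field F] (hrs : r ≤ s) : rankDrop (mulZ F r s) 0 = r := by
  obtain ⟨f, g, H⟩ := exists_colonGens_zero F hrs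
  exact H.rankDrop_mulZ

lemma rankDrop_mulZ_eq_zero (F : Type*) [Field F] (hm : r + s ≤ m + 1) :
    rankDrop (mulZ F r s) m = 0 := by
  rw [rankDrop, mulZ_pow_eq_zero hm, LinearMap.range_zero, finrank_bot, Nat.zero_sub]

lemma rankDrop_mulZ_succ (F : Type*) [Field F] (hrs : r ≤ s) (m : ℕ) :
    rankDrop (mulZ F r s) (m + 1) = rankDrop (mulZ F r s) m ∨
      rankDrop (mulZ F r s) (m + 1) + rankDrop (mulZ F r s) m + (m + 1) = r + s := by
  obtain hm | hm := lt_or_ge m (r + s)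
  · obtain ⟨a, b, f, g, H⟩ := exists_colonGens F hrs hm.le
    have hb := H.right_degree_pos hm
    have hdeg := H.degree_add
    obtain ⟨f', g', H' | H'⟩ := H.exists_succ hm <;> rw [H.rankDrop_mulZ, H'.rankDrop_mulZ]
    · exact Or.inl rfl
    · exact Or.inr (by omega)
  · rw [rankDrop_mulZ_eq_zero F (by omega), rankDrop_mulZ_eq_zero F (by omega)]
    exact Or.inl rfl

end ColonRanks

section Determinant

open MvPolynomial

variable {R : Type*} [CommRing R] {r s k : ℕ}

lemma coeff_zForm_pow (n i j : ℕ) :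
    coeff (bideg i j) (zForm R ^ n) = if i + j = n then (n.choose j : R) else 0 := by
  have hterm (t : ℕ) : (X 1 ^ t * X 0 ^ (n - t) * (n.choose t : MvPolynomial (Fin 2) R)) =
      monomial (bideg (n - t) t) (n.choose t : R) := by
    rw [monomial_bideg, map_natCast]
    ring
  rw [zForm, add_comm, add_pow, coeff_sum]
  simp only [hterm, coeff_monomial, bideg_eq_iff, bideg_apply_zero, bideg_apply_one]
  split_ifs with h
  · rw [sum_eq_single j, if_pos ⟨by omega, rfl⟩]
    · exact fun t _ ht => if_neg fun h' => ht h'.2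
    · intro hj
      rw [mem_range] at hj
      omega
  · refine sum_eq_zero fun t ht => if_neg ?_
    rw [mem_range] at ht
    omega

/-- The form `∑ v_i x ^ i y ^ (k - i)` of degree `k`. -/
noncomputable def form (v : Fin (k + 1) → R) : MvPolynomial (Fin 2) R :=
  ∑ i : Fin (k + 1), monomial (bideg i (k - i)) (v i)

lemma form_isHomogeneous (v : Fin (k + 1) → R) : (form v).IsHomogeneous k :=
  IsHomogeneous.sum _ _ _ fun i _ => isHomogeneous_monomial _ (by rw [degree_bideg]; omega)

lemma coeff_form (v : Fin (k + 1) → R) (i : Fin (k + 1)) :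
    coeff (bideg i (k - i)) (form v) = v i := by
  rw [form, coeff_sum, sum_eq_single i]
  · rw [coeff_monomial, if_pos rfl]
  · intro j _ hj
    rw [coeff_monomial, if_neg]
    simp [bideg_eq_iff, Fin.val_inj, hj]
  · simp

lemma form_injective : Function.Injective (form : (Fin (k + 1) → R) → _) := fun v w h =>
  funext fun i => by rw [← coeff_form v, h, coeff_form]

lemma form_coeff {h : MvPolynomial (Fin 2) R} (hh : h.IsHomogeneous k) :
    form (fun i : Fin (k + 1) => coeff (bideg i (k - i)) h) = h := by
  ext d
  by_cases hd : d.degree = k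
  · rw [← bideg_self d, degree_bideg] at hd
    have hcoeff := coeff_form (fun i : Fin (k + 1) => coeff (bideg i (k - i)) h) ⟨d 0, by omega⟩
    simpa only [show k - d 0 = d 1 by omega, bideg_self] using hcoeff
  · rw [hh.coeff_eq_zero hd, (form_isHomogeneous _).coeff_eq_zero hd]

lemma exists_form_iff {P : MvPolynomial (Fin 2) R → Prop} :
    (∃ h, h ≠ 0 ∧ h.IsHomogeneous k ∧ P h) ↔ ∃ v : Fin (k + 1) → R, v ≠ 0 ∧ P (form v) := by
  have hzero : form (0 : Fin (k + 1) → R) = 0 := by simp [form]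
  constructor
  · rintro ⟨h, h0, hh, hP⟩
    rw [← form_coeff hh] at h0 hP
    exact ⟨_, fun hv => h0 (by rw [hv, hzero]), hP⟩
  · rintro ⟨v, hv, hP⟩
    exact ⟨form v, fun h => hv (form_injective (h.trans hzero.symm)), form_isHomogeneous v, hP⟩

/-- `Dmat r s (k + 1)` is the matrix of multiplication by `(x + y) ^ (r + s - 2 * (k + 1))` from
degree `k` to degree `r + s - k - 2` of `R[x, y] / (x ^ r, y ^ s)`, in the monomial bases. -/
lemma coeff_zForm_pow_mul_form (hkr : k + 1 ≤ r) (hrs : r ≤ s) (v : Fin (k + 1) → R)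
    (j : Fin (k + 1)) :
    coeff (bideg (r - (k + 1) + j) (s - 1 - j)) (zForm R ^ (r + s - 2 * (k + 1)) * form v) =
      Matrix.vecMul v ((Dmat r s (k + 1)).map (Int.castRingHom R)) j := by
  rw [form, mul_sum, coeff_sum, Matrix.vecMul, dotProduct]
  refine sum_congr rfl fun i _ => ?_
  rw [coeff_mul_monomial', bideg_sub, coeff_zForm_pow, mul_comm]
  simp only [Matrix.map_apply, Dmat, Matrix.of_apply, bideg_le_iff, bideg_apply_zero,
    bideg_apply_one]
  by_cases hentry : (j : ℕ) + (k + 1) ≤ s + i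
  · by_cases hi : (i : ℕ) ≤ r - (k + 1) + j
    · rw [if_pos (by omega), if_pos (by omega), if_pos hentry, eq_intCast, Int.cast_natCast,
        show s - 1 - j - (k - i) = s + i - j - (k + 1) by omega]
    · rw [if_neg (by omega), if_pos hentry, Nat.choose_eq_zero_of_lt (by omega), Nat.cast_zero,
        map_zero, mul_zero]
  · rw [if_neg (by omega), if_neg hentry, map_zero, mul_zero]

lemma zForm_pow_mul_form_mem_iff (hkr : k + 1 ≤ r) (hrs : r ≤ s) (v : Fin (k + 1) → R) :
    zForm R ^ (r + s - 2 * (k + 1)) * form v ∈ truncIdeal R r s ↔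
      Matrix.vecMul v ((Dmat r s (k + 1)).map (Int.castRingHom R)) = 0 := by
  rw [mem_truncIdeal_iff]
  constructor
  · intro H
    funext j
    rw [← coeff_zForm_pow_mul_form hkr hrs]
    exact H _ (by omega) _ (by omega)
  · intro H i hi j hj
    by_cases hd : i + j + k + 2 = r + s
    · obtain ⟨t, rfl⟩ : ∃ t, i = r - (k + 1) + t := ⟨i - (r - (k + 1)), by omega⟩
      obtain rfl : j = s - 1 - t := by omega
      exact (coeff_zForm_pow_mul_form hkr hrs v ⟨t, by omega⟩).trans (congrFun H _)
    · apply ((zForm_isHomogeneous.pow _).mul (form_isHomogeneous v)).coeff_eq_zero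
      rw [degree_bideg]
      omega

variable {F : Type*} [Field F]

lemma Ddet_succ_eq_zero_iff (hkr : k + 1 ≤ r) (hrs : r ≤ s) :
    (Ddet r s (k + 1) : F) = 0 ↔ ∃ h : MvPolynomial (Fin 2) F, h ≠ 0 ∧ h.IsHomogeneous k ∧
      zForm F ^ (r + s - 2 * (k + 1)) * h ∈ truncIdeal F r s := by
  rw [exists_form_iff, Ddet, Int.cast_det, ← Matrix.exists_vecMul_eq_zero_iff]
  simp only [zForm_pow_mul_form_mem_iff hkr hrs]
  rfl

lemma Ddet_ne_zero_iff (hkr : k ≤ r) (hrs : r ≤ s) :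
    (Ddet r s k : F) ≠ 0 ↔ rankDrop (mulZ F r s) (r + s - 2 * k) = k := by
  obtain _ | k := k
  · simp [Ddet, rankDrop_mulZ_eq_zero]
  obtain ⟨a, b, f, g, H⟩ := exists_colonGens F hrs (Nat.sub_le (r + s) (2 * (k + 1)))
  have hdeg := H.degree_add
  rw [H.rankDrop_mulZ, ne_eq, Ddet_succ_eq_zero_iff hkr hrs, H.exists_ne_zero_iff]
  omega

end Determinant

section TensorProduct

open MvPolynomial

variable {R : Type*} [CommRing R] {r s : ℕ}

lemma isUnit_one_add_mk_X_one : IsUnit (1 + Ideal.Quotient.mk (truncIdeal R r s) (X 1)) :=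
  IsNilpotent.isUnit_one_add
    ⟨s, by rw [← map_pow, Ideal.Quotient.eq_zero_iff_mem.2 (X_one_pow_mem_truncIdeal r s)]⟩

/-- The automorphism `x ↦ x * (1 + y)`, `y ↦ y` of `R[x, y] / (x ^ r, y ^ s)`, which sends
`1 + x + y` to `(1 + x) * (1 + y)`. -/
noncomputable def twist (R : Type*) [CommRing R] (r s : ℕ) : TruncAlg R r s →ₐ[R] TruncAlg R r s :=
  Ideal.Quotient.liftₐ (truncIdeal R r s)
    ((Ideal.Quotient.mkₐ R (truncIdeal R r s)).comp (aeval ![X 0 * (1 + X 1), X 1])) <| by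
      suffices truncIdeal R r s ≤ (truncIdeal R r s).comap (aeval ![X 0 * (1 + X 1), X 1]) from
        fun h hh => Ideal.Quotient.eq_zero_iff_mem.2 (this hh)
      refine Ideal.span_le.2 (Set.pair_subset ?_ ?_)
      · simpa [mul_pow] using Ideal.mul_mem_right _ _ (X_zero_pow_mem_truncIdeal r s)
      · simpa using X_one_pow_mem_truncIdeal r s

lemma twist_mk (h : MvPolynomial (Fin 2) R) : twist R r s (Ideal.Quotient.mk _ h) =
    Ideal.Quotient.mk _ (aeval ![X 0 * (1 + X 1), X 1] h) := rfl

lemma twist_mk_X_zero : twist R r s (Ideal.Quotient.mk _ (X 0)) =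
    Ideal.Quotient.mk _ (X 0 * (1 + X 1)) := by
  rw [twist_mk, aeval_X]
  rfl

lemma twist_mk_X_one : twist R r s (Ideal.Quotient.mk _ (X 1)) = Ideal.Quotient.mk _ (X 1) := by
  rw [twist_mk, aeval_X]
  rfl

lemma twist_one_add_zForm : twist R r s (1 + Ideal.Quotient.mk _ (zForm R)) =
    Ideal.Quotient.mk _ ((1 + X 0) * (1 + X 1)) := by
  rw [zForm, map_add, map_add, map_one, map_add, twist_mk_X_zero, twist_mk_X_one, ← map_add,
    ← map_one (Ideal.Quotient.mk _), ← map_add]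
  congr 1
  ring

lemma twist_surjective : Function.Surjective (twist R r s) := by
  obtain ⟨u, hu⟩ := (isUnit_one_add_mk_X_one (R := R) (r := r) (s := s)).exists_right_inv
  have htu := congrArg (twist R r s) hu
  rw [map_mul, map_add, map_one, twist_mk_X_one] at htu
  have hpre (i : Fin 2) : ∃ t, twist R r s t = Ideal.Quotient.mk _ (X i) := by
    fin_cases i
    · refine ⟨Ideal.Quotient.mk _ (X 0) * u, ?_⟩
      rw [map_mul, twist_mk_X_zero, map_mul, map_add, map_one, mul_assoc, htu, mul_one]
      rfl
    · exact ⟨_, twist_mk_X_one⟩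
  choose t ht using hpre
  have hcomp : (twist R r s).comp (aeval t) = Ideal.Quotient.mkₐ R (truncIdeal R r s) := by
    ext i
    simp [ht]
  intro x
  obtain ⟨h, rfl⟩ := Ideal.Quotient.mk_surjective x
  exact ⟨aeval t h, DFunLike.congr_fun hcomp h⟩

lemma twist_bijective : Function.Bijective (twist R r s) :=
  ⟨OrzechProperty.injective_of_surjective_endomorphism (twist R r s).toLinearMap twist_surjective,
    twist_surjective⟩

lemma coeff_one_add_X_zero_mul (h : MvPolynomial (Fin 2) R) (i : Fin r) (j : ℕ) :
    coeff (bideg i.rev j) ((1 + X 0) * h) =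
      (jordanBlock R r).mulVec (fun i' => coeff (bideg i'.rev j) h) i := by
  rw [jordanBlock_mulVec, add_mul, one_mul, coeff_add, coeff_X_mul']
  congr 1
  have hsub (n : ℕ) : bideg n j - Finsupp.single 0 1 = bideg (n - 1) j := by
    simp [eq_comm, bideg_eq_iff]
  simp only [Finsupp.mem_support_iff, bideg_apply_zero, hsub, Fin.val_rev]
  split_ifs <;> first | omega | rfl

lemma coeff_one_add_X_one_mul (h : MvPolynomial (Fin 2) R) (i : ℕ) (j : Fin s) :
    coeff (bideg i j.rev) ((1 + X 1) * h) =
      (jordanBlock R s).mulVec (fun j' => coeff (bideg i j'.rev) h) j := by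
  rw [jordanBlock_mulVec, add_mul, one_mul, coeff_add, coeff_X_mul']
  congr 1
  have hsub (n : ℕ) : bideg i n - Finsupp.single 1 1 = bideg i (n - 1) := by
    simp [eq_comm, bideg_eq_iff]
  simp only [Finsupp.mem_support_iff, bideg_apply_one, hsub, Fin.val_rev]
  split_ifs <;> first | omega | rfl

lemma kronecker_mulVec_apply {l n : Type*} [Fintype l] [Fintype n] (A : Matrix l l R)
    (B : Matrix n n R) (v : l × n → R) (i : l) (j : n) :
    (A ⊗ₖ B).mulVec v (i, j) = A.mulVec (fun i' => B.mulVec (fun j' => v (i', j')) j) i := by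
  simp only [Matrix.mulVec, dotProduct, Fintype.sum_prod_type, Matrix.kroneckerMap_apply, mul_sum,
    mul_assoc]

lemma coords_one_add_mul_one_add_mul (h : MvPolynomial (Fin 2) R) :
    coords R r s ((1 + X 0) * (1 + X 1) * h) =
      (jordanBlock R r ⊗ₖ jordanBlock R s).mulVec (coords R r s h) := by
  funext ⟨i, j⟩
  rw [kronecker_mulVec_apply, mul_assoc, coords_apply, coeff_one_add_X_zero_mul]
  simp only [coeff_one_add_X_one_mul, coords_apply]

/-- Coordinates on `R[x, y] / (x ^ r, y ^ s)` in which multiplication by `1 + x + y` is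
`J_r ⊗ J_s`. -/
noncomputable def tensorEquiv (R : Type*) [CommRing R] (r s : ℕ) :
    TruncAlg R r s ≃ₗ[R] (Fin r × Fin s → R) :=
  LinearEquiv.ofBijective (twist R r s).toLinearMap twist_bijective ≪≫ₗ coordsEquiv R r s

lemma tensorEquiv_add_mulZ (x : TruncAlg R r s) :
    tensorEquiv R r s (x + mulZ R r s x) =
      (jordanBlock R r ⊗ₖ jordanBlock R s).mulVec (tensorEquiv R r s x) := by
  have happly (x : TruncAlg R r s) :
      tensorEquiv R r s x = coordsEquiv R r s (twist R r s x) := rfl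
  obtain ⟨h, hh⟩ := Ideal.Quotient.mk_surjective (twist R r s x)
  have hmul : x + mulZ R r s x = (1 + Ideal.Quotient.mk _ (zForm R)) * x := by
    rw [mulZ, LinearMap.mulLeft_apply, add_mul, one_mul]
  rw [happly, happly, hmul, map_mul, twist_one_add_zForm, ← hh, ← map_mul, coordsEquiv_mk,
    coordsEquiv_mk, coords_one_add_mul_one_add_mul]

lemma rankDrop_mulZ_eq_conjugate {F : Type*} [Field F] {ι : Type} [Fintype ι] [DecidableEq ι]
    {lam : ι → ℕ}
    (hsim : MatSimilar F (jordanBlock F r ⊗ₖ jordanBlock F s) (jordanBlockDiag F lam)) :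
    rankDrop (mulZ F r s) = conjugate lam := by
  obtain ⟨e, he⟩ := hsim
  rw [← rankDrop_blockNilpotent (F := F)]
  refine rankDrop_eq_of_semiconj (tensorEquiv F r s ≪≫ₗ e) fun x => ?_
  have hB := he (tensorEquiv F r s x)
  rw [← tensorEquiv_add_mulZ, map_add, map_add] at hB
  simp [blockNilpotent, ← hB]

end TensorProduct

section Jumps

/-- A jump of `(r, s)` at `p`: a `k ≤ r` for which `p` does not divide `D_k(r, s)`. -/
def IsJump (p r s k : ℕ) : Prop := k ≤ r ∧ ¬ (p : ℤ) ∣ Ddet r s k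

variable {F : Type*} [Field F] {p : ℕ} [CharP F p] {r s : ℕ} {lam : Fin r → ℕ}

lemma isJump_iff_mem_range_conjugate (hrs : r ≤ s)
    (hsim : MatSimilar F (jordanBlock F r ⊗ₖ jordanBlock F s) (jordanBlockDiag F lam)) {k : ℕ} :
    IsJump p r s k ↔ k ∈ Set.range (conjugate lam) := by
  have hrank := rankDrop_mulZ_eq_conjugate hsim
  have hle (m : ℕ) : conjugate lam m ≤ r :=
    (conjugate_antitone lam m.zero_le).trans_eq (by rw [← hrank, rankDrop_mulZ_zero F hrs])
  have hiff (hkr : k ≤ r) : ¬ (p : ℤ) ∣ Ddet r s k ↔ k ∈ Set.range (conjugate lam) := by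
    rw [← CharP.intCast_eq_zero_iff F p, ← ne_eq, Ddet_ne_zero_iff hkr hrs, hrank]
    exact apply_sub_two_mul_eq_iff_mem_range (conjugate_antitone lam)
      (hrank ▸ rankDrop_mulZ_succ F hrs) (by omega)
  constructor
  · exact fun ⟨hkr, hk⟩ => (hiff hkr).1 hk
  · intro hk
    obtain ⟨m, rfl⟩ := id hk
    exact ⟨hle m, (hiff (hle m)).2 hk⟩

lemma isJump_self (hrs : r ≤ s)
    (hsim : MatSimilar F (jordanBlock F r ⊗ₖ jordanBlock F s) (jordanBlockDiag F lam)) :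
    IsJump p r s r := by
  rw [isJump_iff_mem_range_conjugate hrs hsim, ← rankDrop_mulZ_eq_conjugate hsim]
  exact ⟨0, rankDrop_mulZ_zero F hrs⟩

lemma apply_eq_of_isJump (hrs : r ≤ s) (hlam : Antitone lam)
    (hsim : MatSimilar F (jordanBlock F r ⊗ₖ jordanBlock F s) (jordanBlockDiag F lam))
    {i : Fin r} (hi : IsJump p r s (i + 1)) {l : ℕ} (hl : 0 < l) (hjump : IsJump p r s (i + 1 - l))
    (hmin : ∀ l', 0 < l' → l' < l → ¬ IsJump p r s (i + 1 - l')) :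
    lam i = r + s - 2 * (i + 1) + l := by
  have hstep := rankDrop_mulZ_eq_conjugate hsim ▸ rankDrop_mulZ_succ F hrs
  simp only [isJump_iff_mem_range_conjugate hrs hsim] at hi hjump hmin
  have hsum : conjugate lam (lam i) + (i + 1) + lam i = r + s :=
    apply_add_conjugate_apply hlam hstep hi
  have hle : conjugate lam (lam i) ≤ i := conjugate_apply_le hlam i
  have hlower : (i : ℕ) + 1 - l ≤ conjugate lam (lam i) :=
    not_lt.1 fun h => notMem_range_conjugate hlam h (by omega) hjump
  have hupper : l ≤ i + 1 - conjugate lam (lam i) := not_lt.1 fun h =>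
    hmin _ (by omega) h ⟨lam i, by omega⟩
  omega

lemma apply_eq_succ_of_not_isJump (hrs : r ≤ s) (hlam : Antitone lam)
    (hsim : MatSimilar F (jordanBlock F r ⊗ₖ jordanBlock F s) (jordanBlockDiag F lam))
    {i : ℕ} (hi : i + 1 < r) (hjump : ¬ IsJump p r s (i + 1)) :
    lam ⟨i, by omega⟩ = lam ⟨i + 1, hi⟩ :=
  eq_succ_of_notMem_range_conjugate hlam hi
    (mt (isJump_iff_mem_range_conjugate hrs hsim).2 hjump)

end Jumps

end JordanTensor

open JordanTensor in
theorem stmt_10_general {F : Type*} [Field F] (p : ℕ) [CharP F p] (r s : ℕ) (hrs : r ≤ s)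
    (lam : Fin r → ℕ) (hanti : Antitone lam)
    (hsim : MatSimilar F (jordanBlock F r ⊗ₖ jordanBlock F s) (jordanBlockDiag F lam)) :
    ¬ (p : ℤ) ∣ Ddet r s r ∧
    ∀ k : ℕ, ∀ hk1 : 1 ≤ k, ∀ hk2 : k ≤ r,
      ((IsJump p r s k →
        ∀ l : ℕ, 0 < l → IsJump p r s (k - l) →
          (∀ l', 0 < l' → l' < l → ¬ IsJump p r s (k - l')) →
          lam ⟨k - 1, Nat.sub_one_lt_of_le hk1 hk2⟩ = r + s - 2 * k + l) ∧
      (¬ IsJump p r s k → k < r) ∧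
      (∀ hkr : k < r, ¬ IsJump p r s k →
        lam ⟨k - 1, Nat.sub_one_lt_of_le hk1 hk2⟩ = lam ⟨k, hkr⟩)) := by
  refine ⟨(isJump_self hrs hsim).2, fun k hk1 hk2 => ?_⟩
  obtain ⟨i, rfl⟩ := Nat.exists_eq_add_of_le' hk1
  refine ⟨fun hk l => apply_eq_of_isJump hrs hanti hsim (i := ⟨i, hk2⟩) hk, fun hk => ?_,
    fun hkr => apply_eq_succ_of_not_isJump hrs hanti hsim hkr⟩
  exact lt_of_le_of_ne hk2 fun h => hk (by rw [h]; exact isJump_self hrs hsim)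

/-- Iima–Iwamatsu recurrence: `k` (with `0 ≤ k ≤ r`) is a *jump* when `p ∤ D_k(r,s)`.
Then `p ∤ D_r(r,s)`, and for `1 ≤ k ≤ r`: if `k` is a jump then `λ_k = r + s − 2k + ℓ(k)`
where `ℓ(k)` is the least positive integer with `k − ℓ(k)` a jump; if `k` is not a jump
then `k < r` and `λ_k = λ_{k+1}`. -/
theorem stmt_10 {F : Type*} [Field F] (p : ℕ) (hp : p.Prime) [CharP F p]
    (r s : ℕ) (hr : 1 ≤ r) (hrs : r ≤ s)
    (lam : Fin r → ℕ) (hanti : Antitone lam) (hpos : ∀ i, 0 < lam i)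
    (hsim : MatSimilar F (jordanBlock F r ⊗ₖ jordanBlock F s) (jordanBlockDiag F lam)) :
    ¬ (p : ℤ) ∣ Ddet r s r ∧
    ∀ k : ℕ, ∀ _hk1 : 1 ≤ k, ∀ _hk2 : k ≤ r,
      (((k ≤ r ∧ ¬ (p : ℤ) ∣ Ddet r s k) →
        ∀ l : ℕ, 0 < l →
          (k - l ≤ r ∧ ¬ (p : ℤ) ∣ Ddet r s (k - l)) →
          (∀ l', 0 < l' → l' < l → ¬ (k - l' ≤ r ∧ ¬ (p : ℤ) ∣ Ddet r s (k - l'))) →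
          lam ⟨k - 1, by omega⟩ = r + s - 2 * k + l) ∧
      (¬ (k ≤ r ∧ ¬ (p : ℤ) ∣ Ddet r s k) → k < r) ∧
      (∀ hkr : k < r, ¬ (k ≤ r ∧ ¬ (p : ℤ) ∣ Ddet r s k) →
        lam ⟨k - 1, by omega⟩ = lam ⟨k, hkr⟩)) := by
  exact stmt_10_general p r s hrs lam hanti hsim
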